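/- arXiv:1311.3657 — 2 statements merged into one kernel-verified Lean document; each statement's English description precedes it below -/
import Mathlib

section
/- Let F be a slant Riemannian submersion with slant angle θ from a cosymplectic manifold M(φ, ξ, η, g_M) onto a Riemannian manifold (N, g_N), with ξ vertical. Then for all vertical vector fields U, V: g_M(ψU, ψV) = cos²θ·(g_M(U, V) − η(U)η(V)) and g_M(ωU, ωV) = sin²θ·(g_M(U, V) − η(U)η(V)). -/
/-
An algebraic model of a (slant) Riemannian submersion `F` from a cosymplectic
manifold `(M, φ, ξ, η, g_M)` onto a Riemannian manifold `(N, g_N)`.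
`E` plays the role of the vector fields on `M`, with `g_M` modelled by the
real inner product `⟪·, ·⟫`, and `E'` plays the role of the vector fields
along `F` (sections of the pull-back bundle `F⁻¹TN`), with `g_N` modelled by
its inner product.  The 1-form `η` is `η X = ⟪X, ξ⟫`.
-/

noncomputable section

open scoped RealInnerProductSpace
open Real

structure CosymplecticRS (E E' : Type) [NormedAddCommGroup E] [InnerProductSpace ℝ E]
    [NormedAddCommGroup E'] [InnerProductSpace ℝ E'] where
  /-- the Levi-Civita covariant derivative `∇` of `(M, g_M)` (modelled algebraically) -/
  nab : E →ₗ[ℝ] E →ₗ[ℝ] E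
  /-- the orthogonal projection `𝒱` onto the vertical distribution `ker F_*` -/
  pV : E →ₗ[ℝ] E
  pV_idem : ∀ X, pV (pV X) = pV X
  pV_symm : ∀ X Y, ⟪pV X, Y⟫ = ⟪X, pV Y⟫
  /-- the `(1,1)`-tensor field `φ` of the almost contact metric structure -/
  phi : E →ₗ[ℝ] E
  /-- the characteristic (Reeb) vector field `ξ` -/
  xi : E
  /-- `φ² = -I + η ⊗ ξ` -/
  phi_sq : ∀ X, phi (phi X) = -X + ⟪X, xi⟫ • xi
  /-- `φ ξ = 0` -/
  phi_xi : phi xi = 0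
  /-- `η ∘ φ = 0` -/
  eta_phi : ∀ X, ⟪phi X, xi⟫ = 0
  /-- `η(ξ) = 1` -/
  xi_unit : ⟪xi, xi⟫ = 1
  /-- `g_M(φX, φY) = g_M(X,Y) - η(X) η(Y)` -/
  phi_metric : ∀ X Y, ⟪phi X, phi Y⟫ = ⟪X, Y⟫ - ⟪X, xi⟫ * ⟪Y, xi⟫
  /-- cosymplectic: `∇φ = 0` -/
  nab_phi : ∀ X Y, nab X (phi Y) = phi (nab X Y)
  /-- cosymplectic: `∇ξ = 0` -/
  nab_xi : ∀ X, nab X xi = 0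
  /-- the differential `F_*` of the submersion -/
  Fstar : E →ₗ[ℝ] E'
  /-- `F` has maximal rank -/
  Fstar_surj : Function.Surjective Fstar
  /-- the vertical distribution is `ker F_*` -/
  ker_Fstar : ∀ X, Fstar X = 0 ↔ pV X = X
  /-- `F_*` preserves the lengths of horizontal vectors -/
  Fstar_isom : ∀ X, pV X = 0 → ‖Fstar X‖ = ‖X‖
  /-- the pull-back connection `∇^F` on `F⁻¹TN` (modelled algebraically) -/
  nabF : E →ₗ[ℝ] E' →ₗ[ℝ] E'
  /-- for a Riemannian submersion, `(∇F_*)(X,Y) = 0` for horizontal `X`, `Y` -/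
  sff_horiz : ∀ X Y, pV X = 0 → pV Y = 0 → nabF X (Fstar Y) = Fstar (nab X Y)
  /-- the second fundamental form `∇F_*` is symmetric -/
  sff_symm : ∀ X Y, nabF X (Fstar Y) - Fstar (nab X Y) = nabF Y (Fstar X) - Fstar (nab Y X)

namespace CosymplecticRS

variable {E E' : Type} [NormedAddCommGroup E] [InnerProductSpace ℝ E]
  [NormedAddCommGroup E'] [InnerProductSpace ℝ E'] (S : CosymplecticRS E E')

/-- the horizontal projection `ℋ` -/
def pH (X : E) : E := X - S.pV X

/-- `X` is a vertical vector field -/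
def Vert (X : E) : Prop := S.pV X = X

/-- `X` is a horizontal vector field -/
def Horiz (X : E) : Prop := S.pV X = 0

/-- the O'Neill tensor `T`, `T_U W = ℋ∇_{𝒱U}(𝒱W) + 𝒱∇_{𝒱U}(ℋW)` -/
def T (U W : E) : E := S.pH (S.nab (S.pV U) (S.pV W)) + S.pV (S.nab (S.pV U) (S.pH W))

/-- the O'Neill tensor `A`, `A_X Y = 𝒱∇_{ℋX}(ℋY) + ℋ∇_{ℋX}(𝒱Y)` -/
def A (X Y : E) : E := S.pV (S.nab (S.pH X) (S.pH Y)) + S.pH (S.nab (S.pH X) (S.pV Y))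

/-- `ψU`, the vertical part of `φU` -/
def psi (U : E) : E := S.pV (S.phi U)

/-- `ωU`, the horizontal part of `φU` -/
def om (U : E) : E := S.pH (S.phi U)

/-- `BX`, the vertical part of `φX` -/
def B (X : E) : E := S.pV (S.phi X)

/-- `CX`, the horizontal part of `φX` -/
def C (X : E) : E := S.pH (S.phi X)

/-- `F` is slant with slant angle `θ`: for every nonzero vertical `X` (orthogonal
to `ξ`), the angle between `φX` and the vertical space is `θ`, i.e.
`‖ψX‖ = cos θ · ‖φX‖`. -/
def HasSlantAngle (θ : ℝ) : Prop :=
  ∀ X, S.Vert X → X ≠ 0 → ⟪X, S.xi⟫ = 0 → ‖S.psi X‖ = Real.cos θ * ‖S.phi X‖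

/-- `F` is a slant Riemannian submersion -/
def IsSlant : Prop := ∃ θ ∈ Set.Icc (0:ℝ) (Real.pi / 2), S.HasSlantAngle θ

/-- the second fundamental form of `F`: `(∇F_*)(X,Y) = ∇^F_X F_* Y - F_*(∇_X Y)` -/
def SFF (X Y : E) : E' := S.nabF X (S.Fstar Y) - S.Fstar (S.nab X Y)

/-- `F` is a harmonic map: its tension field `τ(F) = Σᵢ (∇F_*)(eᵢ, eᵢ)` vanishes -/
def IsHarmonic : Prop :=
  ∀ b : OrthonormalBasis (Fin (Module.finrank ℝ E)) ℝ E, ∑ i, S.SFF (b i) (b i) = 0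

/-- `F` is a totally geodesic map: `∇F_* ≡ 0` -/
def IsTotallyGeodesicMap : Prop := ∀ X Y, S.SFF X Y = 0

/-- `ω` is parallel: `(∇_U ω)W = ℋ∇_U(ωW) - ω(𝒱∇_U W) = 0` for vertical `U`, `W` -/
def OmParallel : Prop :=
  ∀ U W, S.Vert U → S.Vert W → S.pH (S.nab U (S.om W)) = S.om (S.pV (S.nab U W))

/-- the vertical distribution `ker F_*` as a submodule -/
def vertSub : Submodule ℝ E := LinearMap.ker S.Fstar

/-- the horizontal distribution `(ker F_*)^⊥` as a submodule -/
def horizSub : Submodule ℝ E := LinearMap.ker S.pV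

/-- the curvature tensor of a cosymplectic space form `M(c)` of constant
`φ`-sectional curvature `c` -/
def Rc (c : ℝ) (X Y Z : E) : E :=
  (c/4) • (⟪Y, Z⟫ • X - ⟪X, Z⟫ • Y + (⟪X, S.xi⟫ * ⟪Z, S.xi⟫) • Y
    - (⟪Y, S.xi⟫ * ⟪Z, S.xi⟫) • X + (⟪X, Z⟫ * ⟪Y, S.xi⟫) • S.xi
    - (⟪Y, Z⟫ * ⟪X, S.xi⟫) • S.xi + ⟪S.phi Y, Z⟫ • S.phi X
    - ⟪S.phi X, Z⟫ • S.phi Y - (2 * ⟪S.phi X, Y⟫) • S.phi Z)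

/-- the sectional curvature `K̂(U ∧ V)` of a fibre of a submersion of a
cosymplectic space form `M(c)`, computed through the Gauss equation
`K̂(U∧V) = K(U∧V) - ‖T_U V‖² + g(T_U U, T_V V)` -/
def Khat (c : ℝ) (U V : E) : ℝ :=
  ⟪S.Rc c U V V, U⟫ - ‖S.T U V‖ ^ 2 + ⟪S.T U U, S.T V V⟫

end CosymplecticRS

section InnerProductSpace

variable {𝕜 V W M : Type*} [RCLike 𝕜] [SeminormedAddCommGroup V] [InnerProductSpace 𝕜 V]
  [SeminormedAddCommGroup W] [InnerProductSpace 𝕜 W] [AddCommGroup M] [Module 𝕜 M]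

theorem inner_sub_map_sub_map {P : V →ₗ[𝕜] V} (hP : P.IsSymmetricProjection) (x y : V) :
    inner 𝕜 (x - P x) (y - P y) = inner 𝕜 x y - inner 𝕜 (P x) (P y) := by
  have inner_map_map : inner 𝕜 (P x) (P y) = inner 𝕜 x (P y) := by
    rw [hP.isSymmetric x (P y), ← Module.End.mul_apply, hP.isIdempotentElem.eq]
  rw [inner_sub_left, inner_sub_right, inner_sub_right, hP.isSymmetric x y, inner_map_map]
  ring

theorem inner_sub_inner_smul_self_right {e : V} (he : inner 𝕜 e e = 1) (x : V) :
    inner 𝕜 e (x - inner 𝕜 e x • e) = 0 := by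
  rw [inner_sub_right, inner_smul_right, he, mul_one, sub_self]

theorem inner_map_map_eq_sq_mul_of_norm_map_eq_mul {f : M →ₗ[𝕜] V} {g : M →ₗ[𝕜] W}
    {p : Submodule 𝕜 M} {c : ℝ} (h : ∀ x ∈ p, ‖f x‖ = c * ‖g x‖) {x y : M}
    (hx : x ∈ p) (hy : y ∈ p) :
    inner 𝕜 (f x) (f y) = (c : 𝕜) ^ 2 * inner 𝕜 (g x) (g y) := by
  have hIy : (RCLike.I : 𝕜) • y ∈ p := p.smul_mem _ hy
  rw [inner_eq_sum_norm_sq_div_four, inner_eq_sum_norm_sq_div_four (g x)]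
  simp only [← map_smul, ← map_add, ← map_sub]
  rw [h _ (p.add_mem hx hy), h _ (p.sub_mem hx hy), h _ (p.add_mem hx hIy),
    h _ (p.sub_mem hx hIy)]
  push_cast
  ring

end InnerProductSpace

namespace CosymplecticRS

variable {E E' : Type} [NormedAddCommGroup E] [InnerProductSpace ℝ E]
  [NormedAddCommGroup E'] [InnerProductSpace ℝ E'] {S : CosymplecticRS E E'} {θ : ℝ} {U V : E}

theorem mem_vertSub : U ∈ S.vertSub ↔ S.Vert U :=
  S.ker_Fstar U

variable (S) in
theorem isSymmetricProjection_pV : S.pV.IsSymmetricProjection where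
  isIdempotentElem := LinearMap.ext S.pV_idem
  isSymmetric := S.pV_symm

variable (S U V) in
theorem inner_om_om_eq_sub :
    ⟪S.om U, S.om V⟫ = ⟪S.phi U, S.phi V⟫ - ⟪S.psi U, S.psi V⟫ :=
  inner_sub_map_sub_map S.isSymmetricProjection_pV (S.phi U) (S.phi V)

variable (S U) in
theorem phi_sub_smul_xi (a : ℝ) : S.phi (U - a • S.xi) = S.phi U := by
  rw [map_sub, map_smul, S.phi_xi, smul_zero, sub_zero]

theorem Vert.sub_smul_xi (hU : S.Vert U) (hxi : S.Vert S.xi) (a : ℝ) :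
    S.Vert (U - a • S.xi) := by
  rw [← mem_vertSub] at hU hxi ⊢
  exact S.vertSub.sub_mem hU (S.vertSub.smul_mem a hxi)

-- The slant condition only sees nonzero vectors orthogonal to `ξ`; since `φ ξ = 0`, neither
-- `φ U` nor `ψ U` changes when `U` is replaced by its component orthogonal to `ξ`.
theorem HasSlantAngle.norm_psi (hsl : S.HasSlantAngle θ) (hxi : S.Vert S.xi) (hU : S.Vert U) :
    ‖S.psi U‖ = Real.cos θ * ‖S.phi U‖ := by
  have phi_perp : S.phi (U - ⟪U, S.xi⟫ • S.xi) = S.phi U := S.phi_sub_smul_xi U _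
  rw [psi, ← phi_perp]
  rcases eq_or_ne (U - ⟪U, S.xi⟫ • S.xi) 0 with perp_eq_zero | perp_ne_zero
  · simp [perp_eq_zero]
  · have inner_perp_xi : ⟪U - ⟪U, S.xi⟫ • S.xi, S.xi⟫ = 0 := by
      rw [real_inner_comm, ← real_inner_comm U S.xi]
      exact inner_sub_inner_smul_self_right S.xi_unit U
    exact hsl _ (hU.sub_smul_xi hxi _) perp_ne_zero inner_perp_xi

theorem HasSlantAngle.inner_psi_psi (hsl : S.HasSlantAngle θ) (hxi : S.Vert S.xi)
    (hU : S.Vert U) (hV : S.Vert V) :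
    ⟪S.psi U, S.psi V⟫ = Real.cos θ ^ 2 * ⟪S.phi U, S.phi V⟫ :=
  inner_map_map_eq_sq_mul_of_norm_map_eq_mul (f := S.pV ∘ₗ S.phi) (p := S.vertSub)
    (fun _ hX ↦ hsl.norm_psi hxi (mem_vertSub.mp hX)) (mem_vertSub.mpr hU) (mem_vertSub.mpr hV)

theorem HasSlantAngle.inner_om_om (hsl : S.HasSlantAngle θ) (hxi : S.Vert S.xi)
    (hU : S.Vert U) (hV : S.Vert V) :
    ⟪S.om U, S.om V⟫ = Real.sin θ ^ 2 * ⟪S.phi U, S.phi V⟫ := by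
  rw [S.inner_om_om_eq_sub U V, hsl.inner_psi_psi hxi hU hV, Real.sin_sq]
  ring

end CosymplecticRS

/-- For a slant Riemannian submersion with slant angle `θ` from a
cosymplectic manifold onto a Riemannian manifold, with `ξ` vertical:
`g_M(ψU, ψV) = cos²θ (g_M(U,V) - η(U)η(V))` and
`g_M(ωU, ωV) = sin²θ (g_M(U,V) - η(U)η(V))` for all vertical `U, V`. -/
theorem stmt2 {E E' : Type} [NormedAddCommGroup E] [InnerProductSpace ℝ E]
    [NormedAddCommGroup E'] [InnerProductSpace ℝ E']
    (S : CosymplecticRS E E') (θ : ℝ) (hθ : θ ∈ Set.Icc (0:ℝ) (Real.pi / 2))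
    (hsl : S.HasSlantAngle θ) (hxi : S.Vert S.xi) :
    ∀ U V, S.Vert U → S.Vert V →
      ⟪S.psi U, S.psi V⟫ = Real.cos θ ^ 2 * (⟪U, V⟫ - ⟪U, S.xi⟫ * ⟪V, S.xi⟫) ∧
      ⟪S.om U, S.om V⟫ = Real.sin θ ^ 2 * (⟪U, V⟫ - ⟪U, S.xi⟫ * ⟪V, S.xi⟫) := by
  intro U V hU hV
  rw [← S.phi_metric U V]
  exact ⟨hsl.inner_psi_psi hxi hU hV, hsl.inner_om_om hxi hU hV⟩
end
end

section
/- Let F be a proper slant Riemannian submersion from a cosymplectic manifold M(φ, ξ, η, g_M) onto a Riemannian manifold (N, g_N), with ξ vertical. Let μ be the orthogonal complement of ω(ker F_*) in (ker F_*)^⊥, so that (ker F_*)^⊥ = ω(ker F_*) ⊕ μ. Then μ is invariant under the endomorphism φ, i.e. φ(μ) ⊆ μ. -/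
/-
An algebraic model of a (slant) Riemannian submersion `F` from a cosymplectic
manifold `(M, φ, ξ, η, g_M)` onto a Riemannian manifold `(N, g_N)`.
`E` plays the role of the vector fields on `M`, with `g_M` modelled by the
real inner product `⟪·, ·⟫`, and `E'` plays the role of the vector fields
along `F` (sections of the pull-back bundle `F⁻¹TN`), with `g_N` modelled by
its inner product.  The 1-form `η` is `η X = ⟪X, ξ⟫`.
-/

noncomputable section

open scoped RealInnerProductSpace
open Real

namespace CosymplecticRS

variable {E E' : Type} [NormedAddCommGroup E] [InnerProductSpace ℝ E]
  [NormedAddCommGroup E'] [InnerProductSpace ℝ E'] (S : CosymplecticRS E E')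

theorem inner_phi_left (X Y : E) : ⟪S.phi X, Y⟫ = -⟪X, S.phi Y⟫ := by
  have metric_phi := S.phi_metric X (S.phi Y)
  rw [S.phi_sq, inner_add_right, inner_neg_right, inner_smul_right, S.eta_phi,
    S.eta_phi] at metric_phi
  linarith

variable {S} {X : E}

theorem horiz_iff_forall_inner_eq_zero : S.Horiz X ↔ ∀ U, S.Vert U → ⟪X, U⟫ = 0 := by
  constructor
  · intro (hX : S.pV X = 0) U (hU : S.pV U = U)
    rw [← hU, ← S.pV_symm, hX, inner_zero_left]
  · intro hX
    have inner_self_pV : ⟪S.pV X, S.pV X⟫ = 0 := by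
      rw [S.pV_symm, S.pV_idem]
      exact hX _ (S.pV_idem X)
    exact inner_self_eq_zero.1 inner_self_pV

theorem Horiz.inner_pH_right (hX : S.Horiz X) (Y : E) : ⟪X, S.pH Y⟫ = ⟪X, Y⟫ := by
  rw [pH, inner_sub_right, horiz_iff_forall_inner_eq_zero.1 hX _ (S.pV_idem Y), sub_zero]

theorem Horiz.phi_phi (hX : S.Horiz X) (hxi : S.Vert S.xi) : S.phi (S.phi X) = -X := by
  rw [S.phi_sq, horiz_iff_forall_inner_eq_zero.1 hX _ hxi, zero_smul, add_zero]

variable (S) in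
/-- The distribution `μ`: the orthogonal complement of `ω(ker F_*)` in `(ker F_*)^⊥`. As `om` is
not bundled as a linear map, `ω` is written here as the composite `(id - 𝒱) ∘ φ`. -/
def mu : Submodule ℝ E :=
  S.horizSub ⊓ (S.vertSub.map ((LinearMap.id - S.pV) ∘ₗ S.phi))ᗮ

theorem mem_mu : X ∈ S.mu ↔ S.Horiz X ∧ ∀ U, S.Vert U → ⟪X, S.om U⟫ = 0 := by
  have mem_horizSub : X ∈ S.horizSub ↔ S.Horiz X := LinearMap.mem_ker
  have mem_vertSub (U : E) : U ∈ S.vertSub ↔ S.Vert U := S.ker_Fstar U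
  simp only [mu, Submodule.mem_inf, mem_horizSub, Submodule.mem_orthogonal', Submodule.mem_map,
    mem_vertSub, forall_exists_index, and_imp, forall_apply_eq_imp_iff₂]
  rfl

theorem mem_mu_iff_horiz_phi : X ∈ S.mu ↔ S.Horiz X ∧ S.Horiz (S.phi X) := by
  rw [mem_mu, horiz_iff_forall_inner_eq_zero (X := S.phi X)]
  refine and_congr_right fun hX => forall₂_congr fun U _ => ?_
  rw [om, hX.inner_pH_right, S.inner_phi_left, neg_eq_zero]

end CosymplecticRS

/-- Since `φ` is skew-adjoint, `μ` consists of the horizontal `X` with `φX` horizontal; and `φ²`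
acts as `-1` on horizontal vectors because `ξ` is vertical. -/
theorem stmt3_general {E E' : Type} [NormedAddCommGroup E] [InnerProductSpace ℝ E]
    [NormedAddCommGroup E'] [InnerProductSpace ℝ E']
    (S : CosymplecticRS E E') (hxi : S.Vert S.xi) :
    S.mu ∈ Module.End.invtSubmodule S.phi := by
  rw [Module.End.mem_invtSubmodule_iff_forall_mem_of_mem]
  intro X hX
  obtain ⟨horiz_X, horiz_phi_X⟩ := CosymplecticRS.mem_mu_iff_horiz_phi.1 hX
  refine CosymplecticRS.mem_mu_iff_horiz_phi.2 ⟨horiz_phi_X, ?_⟩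
  rw [horiz_X.phi_phi hxi]
  exact S.horizSub.neg_mem horiz_X

/-- For a proper slant Riemannian submersion from a cosymplectic
manifold onto a Riemannian manifold with `ξ` vertical, the orthogonal complement `μ`
of `ω(ker F_*)` in `(ker F_*)^⊥` is invariant under `φ`:  if `X` is horizontal and
orthogonal to all `ωU` (`U` vertical), then so is `φX`. -/
theorem stmt3 {E E' : Type} [NormedAddCommGroup E] [InnerProductSpace ℝ E]
    [NormedAddCommGroup E'] [InnerProductSpace ℝ E']
    (S : CosymplecticRS E E') (θ : ℝ) (hproper : θ ∈ Set.Ioo (0:ℝ) (Real.pi / 2))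
    (hsl : S.HasSlantAngle θ) (hxi : S.Vert S.xi) :
    ∀ X, S.Horiz X → (∀ U, S.Vert U → ⟪X, S.om U⟫ = 0) →
      S.Horiz (S.phi X) ∧ ∀ U, S.Vert U → ⟪S.phi X, S.om U⟫ = 0 := by
  intro X hX orth_om
  exact CosymplecticRS.mem_mu.1 (stmt3_general S hxi (CosymplecticRS.mem_mu.2 ⟨hX, orth_om⟩))
end
end
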